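/- The infinite series ∑_{n=1}^{∞} 1/(n(2n+1)(2n−1)(6n+1)(6n−1)) converges to (52 − 32·ln 2 − 27·ln 3)/16. -/

import Mathlib

/-!
Write `H n` for the `n`-th harmonic number. Partial fractions give
`1/(n(2n+1)(2n-1)(6n+1)(6n-1)) = 1/n + (1/8)(1/(2n-1) + 1/(2n+1)) - (27/8)(1/(6n-1) + 1/(6n+1))`,
and sieving out the multiples of 2 and 3 turns the partial sums into a combination of `H N`,
`H (2N)`, `H (3N)`, `H (6N)` plus a constant and terms vanishing at infinity (`partial_sum_eq`).
The coefficients of the four harmonic numbers add up to zero, so in the limit `H (kN) - log N`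
may be replaced by `γ + log k` (`tendsto_harmonic_mul_sub_log`), with `γ` cancelling.
-/

open Real Filter Topology

lemma partial_sum_eq (N : ℕ) :
    ∑ n ∈ Finset.range N, 1 / (((n:ℝ)+1) * (2*((n:ℝ)+1)+1) * (2*((n:ℝ)+1)-1)
        * (6*((n:ℝ)+1)+1) * (6*((n:ℝ)+1)-1))
      = 5/16 * (harmonic (1 * N) : ℝ) + 11/8 * (harmonic (2 * N) : ℝ)
        + 27/16 * (harmonic (3 * N) : ℝ) - 27/8 * (harmonic (6 * N) : ℝ) + 13/4
        + 1/8 * (1 / (2 * (N:ℝ) + 1)) - 27/8 * (1 / (6 * (N:ℝ) + 1)) := by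
  induction N with
  | zero => norm_num
  | succ N ih =>
    rw [Finset.sum_range_succ, ih]
    simp only [Nat.mul_add, Nat.mul_one, harmonic_succ]
    push_cast
    have hN : (0:ℝ) ≤ N := Nat.cast_nonneg N
    -- Combine the factors that are multiples of one another before clearing denominators.
    have e1 : 2 * ((N:ℝ) + 1) - 1 = 2 * N + 1 := by ring
    have e2 : 6 * ((N:ℝ) + 1) - 1 = 6 * N + 5 := by ring
    have e3 : 2 * ((N:ℝ) + 1) + 1 = 2 * N + 3 := by ring
    have e4 : 6 * ((N:ℝ) + 1) + 1 = 6 * N + 7 := by ring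
    have f1 : 2 * (N:ℝ) + 1 + 1 = 2 * (N + 1) := by ring
    have f2 : 3 * (N:ℝ) + 2 + 1 = 3 * (N + 1) := by ring
    have f3 : 6 * (N:ℝ) + 1 + 1 = 2 * (3 * N + 1) := by ring
    have f4 : 6 * (N:ℝ) + 2 + 1 = 3 * (2 * N + 1) := by ring
    have f5 : 6 * (N:ℝ) + 3 + 1 = 2 * (3 * N + 2) := by ring
    have f6 : 6 * (N:ℝ) + 4 + 1 = 6 * N + 5 := by ring
    have f7 : 6 * (N:ℝ) + 5 + 1 = 6 * (N + 1) := by ring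
    have f8 : 3 * (N:ℝ) + 1 + 1 = 3 * N + 2 := by ring
    simp only [e1, e2, e3, e4, f1, f2, f3, f4, f5, f6, f7, f8]
    field_simp
    ring

lemma tendsto_harmonic_mul_sub_log {k : ℕ} (hk : 0 < k) :
    Tendsto (fun N : ℕ => (harmonic (k * N) : ℝ) - log N) atTop
      (𝓝 (eulerMascheroniConstant + log k)) := by
  have h := (tendsto_harmonic_sub_log.comp
    (tendsto_id.const_mul_atTop' hk : Tendsto (fun N : ℕ => k * N) atTop atTop)).add_const
      (log k)
  refine h.congr' ?_
  filter_upwards [eventually_gt_atTop 0] with N hN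
  have hk' : (k:ℝ) ≠ 0 := by positivity
  have hN' : (N:ℝ) ≠ 0 := by positivity
  simp only [Function.comp, Nat.cast_mul, log_mul hk' hN']
  ring

lemma tendsto_one_div_mul_add_one {c : ℝ} (hc : 0 < c) :
    Tendsto (fun N : ℕ => 1 / (c * (N:ℝ) + 1)) atTop (𝓝 0) := by
  simp only [one_div]
  exact (tendsto_atTop_add_const_right _ _
    (tendsto_natCast_atTop_atTop.const_mul_atTop hc)).inv_tendsto_atTop

theorem stmt_19 :
    HasSum (fun n : ℕ => 1 / (((n:ℝ)+1) * (2*((n:ℝ)+1)+1) * (2*((n:ℝ)+1)-1) * (6*((n:ℝ)+1)+1) * (6*((n:ℝ)+1)-1))) ((52 - 32 * Real.log 2 - 27 * Real.log 3) / 16) := by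
  rw [hasSum_iff_tendsto_nat_of_nonneg]
  · simp only [partial_sum_eq]
    have h := ((((((tendsto_harmonic_mul_sub_log one_pos).const_mul (5/16)).add
      ((tendsto_harmonic_mul_sub_log two_pos).const_mul (11/8))).add
      ((tendsto_harmonic_mul_sub_log three_pos).const_mul (27/16))).sub
      ((tendsto_harmonic_mul_sub_log (k := 6) (by norm_num)).const_mul (27/8))).add_const
      (13/4)).add
      ((tendsto_one_div_mul_add_one two_pos).const_mul (1/8)) |>.sub
      ((tendsto_one_div_mul_add_one (c := 6) (by norm_num)).const_mul (27/8))
    have h6 : log 6 = log 2 + log 3 := by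
      rw [← log_mul (by norm_num) (by norm_num)]; norm_num
    convert h using 2
    · ring
    · push_cast
      rw [h6, log_one]
      ring
  · intro n
    have hn : (0:ℝ) ≤ n := Nat.cast_nonneg n
    have e1 : 0 ≤ 2 * ((n:ℝ) + 1) - 1 := by linarith
    have e2 : 0 ≤ 6 * ((n:ℝ) + 1) - 1 := by linarith
    positivity
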